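/- arXiv:2205.15564 — 5 statements merged into one kernel-verified Lean document; each statement's English description precedes it below -/
import Mathlib

section
/- Fix data x = (x_1,…,x_ℓ) ∈ 𝔽_q^ℓ. For every subset C ⊆ {1,…,n} with |C| = t, the map from 𝔽_q^t to 𝔽_q^C sending a noise vector z = (z_1,…,z_t) to the tuple of secret shares (f_{x,z}(α_j))_{j∈C} is a bijection. (This is the key step in the information-theoretic t-privacy of the Lagrange data sharing of SecFC: any t colluding clients' shares are consistent with every possible noise pattern in exactly one way.) -/
open Polynomial

/-- The Lagrange/LCC encoding polynomial of data `x` and noise `z`: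
the unique polynomial of degree at most `ℓ + t - 1` taking value `x u` at `β u`
for `u < ℓ` and value `z u` at `β (ℓ + u)` for `u < t`. -/
noncomputable def lccEncode {F : Type*} [Field F] {ℓ t : ℕ} (β : Fin (ℓ + t) → F)
    (x : Fin ℓ → F) (z : Fin t → F) : F[X] :=
  Lagrange.interpolate Finset.univ β (Fin.append x z)

/-- For fixed data `x`, the map sending a noise vector `z` to the tuple of secret
shares of any `t` colluding clients `C` is a bijection. -/
theorem secfc_share_map_bijective
    {F : Type*} [Field F] [Fintype F]
    (ℓ t n : ℕ) (hℓ : 0 < ℓ) (ht : 0 < t) (hn : 0 < n)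
    (β : Fin (ℓ + t) → F) (hβ : Function.Injective β)
    (α : Fin n → F) (hα : Function.Injective α)
    (hαβ : ∀ j u, α j ≠ β u)
    (x : Fin ℓ → F)
    (C : Finset (Fin n)) (hC : C.card = t) :
    Function.Bijective
      (fun (z : Fin t → F) (j : C) => (lccEncode β x z).eval (α (j : Fin n))) := by
  classical
  rw [Fintype.bijective_iff_injective_and_card]
  refine ⟨?_, by simp [hC]⟩
  intro z₁ z₂ h
  have hdeg : ∀ z : Fin t → F, (lccEncode β x z).degree
      < ((Finset.univ : Finset (Fin ℓ ⊕ C)).card : WithBot ℕ) := by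
    intro z
    have h1 := Lagrange.degree_interpolate_lt (s := Finset.univ) (Fin.append x z) hβ.injOn
    have h2 : (Finset.univ : Finset (Fin ℓ ⊕ C)).card
        = (Finset.univ : Finset (Fin (ℓ + t))).card := by
      simp [hC]
    rw [h2]
    exact h1
  have hev : ∀ (z : Fin t → F) (u : Fin (ℓ + t)),
      (lccEncode β x z).eval (β u) = Fin.append x z u := fun z u =>
    Lagrange.eval_interpolate_at_node (Fin.append x z) hβ.injOn (Finset.mem_univ u)
  have hinj : Function.Injective
      (Sum.elim (fun u : Fin ℓ => β (Fin.castAdd t u)) (fun j : C => α (j : Fin n))) := by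
    apply Function.Injective.sumElim
    · intro a b hab
      exact Fin.castAdd_injective ℓ t (hβ hab)
    · intro a b hab
      exact Subtype.ext (hα hab)
    · intro a b hab
      exact hαβ _ _ hab.symm
  have heq : lccEncode β x z₁ = lccEncode β x z₂ := by
    refine Polynomial.eq_of_degrees_lt_of_eval_index_eq Finset.univ hinj.injOn
      (hdeg z₁) (hdeg z₂) ?_
    rintro (u | j) -
    · simp [hev]
    · exact congrFun h j
  funext u
  have := hev z₁ (Fin.natAdd ℓ u)
  rw [heq, hev] at this
  simpa using this.symm
end

section
/- Let L_1,…,L_{ℓ+t} be the Lagrange basis polynomials for the nodes β_1,…,β_{ℓ+t} (so L_w has degree ℓ+t−1 and L_w(β_v) = 1 if v = w and 0 otherwise). For every subset C ⊆ {1,…,n} with |C| = t, the 𝔽_q-linear map from 𝔽_q^t to 𝔽_q^C sending z = (z_1,…,z_t) to the tuple (Σ_{u=1}^t z_u · L_{ℓ+u}(α_j))_{j∈C} is bijective; equivalently, the t×t matrix with entries L_{ℓ+u}(α_j), for j ∈ C and u ∈ {1,…,t}, is invertible over 𝔽_q. -/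
open Polynomial

/-- The kernel of the noise map is trivial. -/
lemma noise_kernel_trivial {F : Type*} [Field F] (ℓ t n : ℕ)
    (β : Fin (ℓ + t) → F) (hβ : Function.Injective β)
    (α : Fin n → F) (hα : Function.Injective α)
    (hαβ : ∀ j u, α j ≠ β u)
    (C : Finset (Fin n)) (hC : C.card = t) (z : Fin t → F)
    (hz : ∀ j ∈ C, ∑ u : Fin t,
      z u * (Lagrange.basis Finset.univ β (Fin.natAdd ℓ u)).eval (α j) = 0) : z = 0 := by
  set P : F[X] := Lagrange.interpolate Finset.univ β (Fin.append 0 z) with hP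
  have hnode : ∀ i, P.eval (β i) = (Fin.append 0 z : Fin (ℓ + t) → F) i := fun i =>
    Lagrange.eval_interpolate_at_node _ hβ.injOn (Finset.mem_univ i)
  have hdeg : P.degree < ((ℓ + t : ℕ) : WithBot ℕ) := by
    have := Lagrange.degree_interpolate_lt (s := Finset.univ) (v := β) (Fin.append 0 z) hβ.injOn
    rwa [Finset.card_univ, Fintype.card_fin] at this
  have hP0 : P = 0 := by
    refine Polynomial.eq_zero_of_degree_lt_of_eval_index_eq_zero
      (s := (Finset.univ : Finset (Fin ℓ ⊕ {j // j ∈ C})))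
      (v := Sum.elim (fun i => β (Fin.castAdd t i)) (fun j : {j // j ∈ C} => α j.1)) ?_ ?_ ?_
    · refine Function.Injective.injOn (Function.Injective.sumElim ?_ ?_ ?_)
      · exact hβ.comp (Fin.castAdd_injective ℓ t)
      · exact hα.comp Subtype.val_injective
      · intro a b h
        exact hαβ _ _ h.symm
    · simpa [hC] using hdeg
    · rintro (i | j) -
      · simp [hnode]
      · have := hz j.1 j.2
        simpa [hP, Lagrange.interpolate_apply, Polynomial.eval_finsetSum, Fin.sum_univ_add]
          using this
  funext u
  have := hnode (Fin.natAdd ℓ u)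
  simpa [hP0] using this.symm

/-- The noise-to-shares linear map built from the Lagrange basis polynomials
`L_{ℓ+1}, …, L_{ℓ+t}` (for nodes `β`) evaluated at the points `α j`, `j ∈ C`,
is bijective for every set `C` of `t` clients; equivalently, the corresponding
`t × t` matrix (for any enumeration of `C`) is invertible over `𝔽_q`. -/
theorem secfc_noise_basis_map_bijective
    {F : Type*} [Field F] [Fintype F]
    (ℓ t n : ℕ) (hℓ : 0 < ℓ) (ht : 0 < t) (hn : 0 < n)
    (β : Fin (ℓ + t) → F) (hβ : Function.Injective β)
    (α : Fin n → F) (hα : Function.Injective α)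
    (hαβ : ∀ j u, α j ≠ β u)
    (C : Finset (Fin n)) (hC : C.card = t) :
    Function.Bijective
      (fun (z : Fin t → F) (j : C) =>
        ∑ u : Fin t, z u * (Lagrange.basis Finset.univ β (Fin.natAdd ℓ u)).eval (α (j : Fin n)))
    ∧ ∀ e : Fin t ≃ {j // j ∈ C},
        IsUnit (Matrix.of fun (j u : Fin t) =>
          (Lagrange.basis Finset.univ β (Fin.natAdd ℓ u)).eval (α ((e j : {j // j ∈ C}) : Fin n))) := by
  constructor
  · rw [Fintype.bijective_iff_injective_and_card]
    refine ⟨?_, by simp [hC]⟩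
    intro z w h
    rw [← sub_eq_zero]
    refine noise_kernel_trivial ℓ t n β hβ α hα hαβ C hC _ fun j hj => ?_
    have := congrFun h ⟨j, hj⟩
    simp only [Pi.sub_apply, sub_mul, Finset.sum_sub_distrib]
    exact sub_eq_zero.2 this
  · intro e
    rw [← Matrix.mulVec_injective_iff_isUnit]
    intro z w h
    rw [← sub_eq_zero]
    refine noise_kernel_trivial ℓ t n β hβ α hα hαβ C hC _ fun j hj => ?_
    have := congrFun h (e.symm ⟨j, hj⟩)
    simp only [Matrix.mulVec, dotProduct, Matrix.of_apply, Equiv.apply_symm_apply] at this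
    simp only [Pi.sub_apply, sub_mul, Finset.sum_sub_distrib]
    simp only [mul_comm] at this ⊢
    exact sub_eq_zero.2 this
end

section
/- Fix data x = (x_1,…,x_ℓ) ∈ 𝔽_q^ℓ. For every subset C ⊆ {1,…,n} with |C| ≤ t, the map from 𝔽_q^t to 𝔽_q^C sending a noise vector z to the share tuple (f_{x,z}(α_j))_{j∈C} is surjective, and every fiber of this map has exactly q^{t−|C|} elements. -/
open Polynomial

theorem lccEncode_surj {F : Type*} [Field F]
    (ℓ t n : ℕ)
    (β : Fin (ℓ + t) → F) (hβ : Function.Injective β)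
    (α : Fin n → F) (hα : Function.Injective α)
    (hαβ : ∀ j u, α j ≠ β u)
    (x : Fin ℓ → F)
    (C : Finset (Fin n)) (hC : C.card ≤ t) :
    Function.Surjective
        (fun (z : Fin t → F) (j : C) => (lccEncode β x z).eval (α (j : Fin n))) := by
  intro y
  let v : Fin ℓ ⊕ C → F := Sum.elim (fun i => β (Fin.castAdd t i)) (fun j => α j)
  have hv : Function.Injective v := by
    apply Function.Injective.sumElim
    · intro a b h
      exact Fin.castAdd_injective ℓ t (hβ h)
    · intro a b h
      exact Subtype.ext (hα h)
    · intro a b h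
      exact hαβ _ _ h.symm
  let g : F[X] := Lagrange.interpolate Finset.univ v (Sum.elim x y)
  have hgdeg : g.degree < ((Finset.univ : Finset (Fin (ℓ + t))).card : WithBot ℕ) := by
    refine lt_of_lt_of_le (Lagrange.degree_interpolate_lt _ hv.injOn) ?_
    simp only [Finset.card_univ, Fintype.card_sum, Fintype.card_fin, Fintype.card_coe]
    exact_mod_cast Nat.add_le_add_left hC ℓ
  have hg : ∀ i, g.eval (v i) = (Sum.elim x y : Fin ℓ ⊕ C → F) i := fun i =>
    Lagrange.eval_interpolate_at_node _ hv.injOn (Finset.mem_univ i)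
  refine ⟨fun u => g.eval (β (Fin.natAdd ℓ u)), ?_⟩
  have key : g = lccEncode β x (fun u => g.eval (β (Fin.natAdd ℓ u))) := by
    refine Lagrange.eq_interpolate_of_eval_eq _ hβ.injOn hgdeg ?_
    intro i _
    induction i using Fin.addCases with
    | left i => rw [Fin.append_left]; exact hg (Sum.inl i)
    | right i => rw [Fin.append_right]
  funext j
  dsimp only
  rw [← key]
  exact hg (Sum.inr j)

/-- The homogeneous share map. -/
noncomputable def shareLin {F : Type*} [Field F] {ℓ t n : ℕ} (β : Fin (ℓ + t) → F)
    (α : Fin n → F) (C : Finset (Fin n)) : (Fin t → F) →ₗ[F] (C → F) where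
  toFun z j := (lccEncode β (0 : Fin ℓ → F) z).eval (α j)
  map_add' a b := by
    have h : (Fin.append (0 : Fin ℓ → F) (a + b)) = Fin.append 0 a + Fin.append 0 b := by
      funext i
      induction i using Fin.addCases <;> simp
    funext j
    simp only [lccEncode, h, map_add, Polynomial.eval_add, Pi.add_apply]
  map_smul' c a := by
    have h : (Fin.append (0 : Fin ℓ → F) (c • a)) = c • Fin.append 0 a := by
      funext i
      induction i using Fin.addCases <;> simp
    funext j
    simp only [lccEncode, h, map_smul, Polynomial.eval_smul, Pi.smul_apply, RingHom.id_apply]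

theorem lccEncode_sub {F : Type*} [Field F] {ℓ t : ℕ} (β : Fin (ℓ + t) → F)
    (x : Fin ℓ → F) (z w : Fin t → F) :
    lccEncode β (0 : Fin ℓ → F) (z - w) = lccEncode β x z - lccEncode β x w := by
  have h : (Fin.append (0 : Fin ℓ → F) (z - w)) = Fin.append x z - Fin.append x w := by
    funext i
    induction i using Fin.addCases <;> simp
  simp only [lccEncode, h, map_sub]

/-- For fixed data `x` and any set `C` of at most `t` clients, the map from noise
vectors to the tuple of shares on `C` is surjective, and every fiber has exactly
`q^(t - |C|)` elements. -/
theorem secfc_share_map_surjective_fibers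
    {F : Type*} [Field F] [Fintype F]
    (ℓ t n : ℕ) (hℓ : 0 < ℓ) (ht : 0 < t) (hn : 0 < n)
    (β : Fin (ℓ + t) → F) (hβ : Function.Injective β)
    (α : Fin n → F) (hα : Function.Injective α)
    (hαβ : ∀ j u, α j ≠ β u)
    (x : Fin ℓ → F)
    (C : Finset (Fin n)) (hC : C.card ≤ t) :
    Function.Surjective
        (fun (z : Fin t → F) (j : C) => (lccEncode β x z).eval (α (j : Fin n)))
    ∧ ∀ y : C → F,
        Nat.card {z : Fin t → F //
            (fun (j : C) => (lccEncode β x z).eval (α (j : Fin n))) = y}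
          = (Fintype.card F) ^ (t - C.card) := by
  have hs := lccEncode_surj ℓ t n β hβ α hα hαβ x C hC
  refine ⟨hs, fun y => ?_⟩
  obtain ⟨w, hw⟩ := hs y
  have hL : Function.Surjective (shareLin β α C) :=
    lccEncode_surj ℓ t n β hβ α hα hαβ 0 C hC
  have hmem : ∀ z : Fin t → F,
      (fun (j : C) => (lccEncode β x z).eval (α (j : Fin n))) = y ↔
        z - w ∈ LinearMap.ker (shareLin β α C) := by
    intro z
    rw [LinearMap.mem_ker, ← hw, funext_iff, funext_iff]
    refine forall_congr' fun j => ?_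
    change _ ↔ (lccEncode β (0 : Fin ℓ → F) (z - w)).eval (α j) = 0
    rw [lccEncode_sub β x, Polynomial.eval_sub, sub_eq_zero]
  have e : {z : Fin t → F //
      (fun (j : C) => (lccEncode β x z).eval (α (j : Fin n))) = y} ≃
        LinearMap.ker (shareLin β α C) :=
    (Equiv.subRight w).subtypeEquiv hmem
  have hr := LinearMap.finrank_range_add_finrank_ker (shareLin β α C)
  rw [LinearMap.range_eq_top.mpr hL, finrank_top, Module.finrank_fintype_fun_eq_card,
    Module.finrank_fintype_fun_eq_card, Fintype.card_coe, Fintype.card_fin] at hr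
  rw [Nat.card_congr e, Module.natCard_eq_pow_finrank (K := F), Nat.card_eq_fintype_card]
  congr 1
  omega
end

section
/- (Data t-privacy of SecFC, distributional form.) Fix data x = (x_1,…,x_ℓ) ∈ 𝔽_q^ℓ and a subset C ⊆ {1,…,n} with |C| ≤ t. If the noise vector z is drawn from the uniform probability distribution on 𝔽_q^t, then the distribution of the share tuple (f_{x,z}(α_j))_{j∈C} is the uniform distribution on 𝔽_q^C; in particular, this distribution is the same for every choice of the data vector x, so the shares of up to t colluding clients reveal no information about x. -/
open Polynomial

lemma pmf_map_uniform_of_affine {G H : Type*} [AddCommGroup G] [AddCommGroup H] [Fintype G]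
    [Fintype H] (f : G → H) (φ : G →+ H) (hf : ∀ z, f z = φ z + f 0)
    (hs : Function.Surjective f) :
    PMF.map f (PMF.uniformOfFintype G) = PMF.uniformOfFintype H := by
  classical
  have hcard : ∀ b, (Finset.univ.filter (fun a => b = f a)).card
      = (Finset.univ.filter (fun a => f 0 = f a)).card := by
    intro b
    obtain ⟨g, rfl⟩ := hs b
    refine Finset.card_bij' (fun a _ => a - g) (fun a _ => a + g) ?_ ?_ ?_ ?_
    · intro a ha
      have h1 := hf a
      have h2 := hf g
      have h3 := hf (a - g)
      simp only [Finset.mem_filter, Finset.mem_univ, true_and, map_sub] at *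
      rw [h3, ← add_left_cancel_iff (a := φ g)]
      rw [← h2, ha, h1]; abel
    · intro a ha
      have h1 := hf a
      have h2 := hf g
      have h3 := hf (a + g)
      simp only [Finset.mem_filter, Finset.mem_univ, true_and, map_add] at *
      rw [h3, h2, add_right_comm, ← h1, ← ha, add_comm]
    · intro a _; simp
    · intro a _; simp
  have hval : ∀ b, PMF.map f (PMF.uniformOfFintype G) b
      = PMF.map f (PMF.uniformOfFintype G) (f 0) := by
    intro b
    simp only [PMF.map_apply, PMF.uniformOfFintype_apply, tsum_fintype]
    rw [← Finset.sum_filter, ← Finset.sum_filter, Finset.sum_const, Finset.sum_const]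
    congr 1
    convert hcard b
  have hsum := (PMF.map f (PMF.uniformOfFintype G)).tsum_coe
  rw [tsum_fintype, Finset.sum_congr rfl (fun b _ => hval b), Finset.sum_const, nsmul_eq_mul,
    Finset.card_univ, mul_comm] at hsum
  ext b
  rw [hval b, PMF.uniformOfFintype_apply]
  exact ENNReal.eq_inv_of_mul_eq_one_left hsum

lemma lcc_append_add {F : Type*} [Field F] {ℓ t : ℕ} (x y : Fin ℓ → F) (z w : Fin t → F) :
    Fin.append (x + y) (z + w) = Fin.append x z + Fin.append y w := by
  funext i
  refine Fin.addCases (fun i => ?_) (fun i => ?_) i <;> simp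

lemma lcc_add {F : Type*} [Field F] {ℓ t : ℕ} (β : Fin (ℓ + t) → F)
    (x y : Fin ℓ → F) (z w : Fin t → F) :
    lccEncode β (x + y) (z + w) = lccEncode β x z + lccEncode β y w := by
  simp only [lccEncode, lcc_append_add, map_add]

/-- Data `t`-privacy of SecFC, distributional form: for any data `x` and any set `C`
of at most `t` colluding clients, if the noise is uniform on `𝔽_q^t` then the tuple of
shares of the clients in `C` is uniform on `𝔽_q^C` (hence independent of `x`). -/
theorem secfc_shares_uniform
    {F : Type*} [Field F] [Fintype F]
    (ℓ t n : ℕ) (hℓ : 0 < ℓ) (ht : 0 < t) (hn : 0 < n)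
    (β : Fin (ℓ + t) → F) (hβ : Function.Injective β)
    (α : Fin n → F) (hα : Function.Injective α)
    (hαβ : ∀ j u, α j ≠ β u)
    (x : Fin ℓ → F)
    (C : Finset (Fin n)) (hC : C.card ≤ t) :
    PMF.map (fun (z : Fin t → F) (j : C) => (lccEncode β x z).eval (α (j : Fin n)))
        (PMF.uniformOfFintype (Fin t → F))
      = PMF.uniformOfFintype (C → F) := by
  classical
  refine pmf_map_uniform_of_affine _
    (AddMonoidHom.mk' (fun (z : Fin t → F) (j : C) => (lccEncode β 0 z).eval (α (j : Fin n))) ?_)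
    ?_ ?_
  · intro a b
    funext j
    have h := lcc_add β 0 0 a b
    rw [add_zero] at h
    simp [h]
  · intro z
    funext j
    have h := lcc_add β 0 x z 0
    rw [add_zero, zero_add] at h
    simp [h]
  · intro y
    let v : Fin ℓ ⊕ C → F := Sum.elim (fun i => β (Fin.castAdd t i)) (fun j => α j)
    have hv : Function.Injective v := by
      refine Function.Injective.sumElim ?_ ?_ ?_
      · intro a b h
        exact Fin.castAdd_injective ℓ t (hβ h)
      · intro a b h
        exact Subtype.ext (hα h)
      · intro a b h
        exact hαβ _ _ h.symm
    let p := Lagrange.interpolate Finset.univ v (Sum.elim x y)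
    have hdeg : p.degree < (Finset.univ : Finset (Fin (ℓ + t))).card := by
      refine lt_of_lt_of_le (Lagrange.degree_interpolate_lt _ hv.injOn) ?_
      have : (Finset.univ : Finset (Fin ℓ ⊕ C)).card ≤ (Finset.univ : Finset (Fin (ℓ + t))).card := by
        simp; exact hC
      exact_mod_cast this
    have hp : ∀ i, p.eval (v i) = Sum.elim x y i := fun i =>
      Lagrange.eval_interpolate_at_node _ hv.injOn (Finset.mem_univ i)
    refine ⟨fun i => p.eval (β (Fin.natAdd ℓ i)), ?_⟩
    have key : p = lccEncode β x (fun i => p.eval (β (Fin.natAdd ℓ i))) := by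
      refine Lagrange.eq_interpolate_of_eval_eq _ hβ.injOn hdeg ?_
      intro i _
      refine Fin.addCases (fun i => ?_) (fun i => ?_) i
      · rw [Fin.append_left]; exact hp (Sum.inl i)
      · rw [Fin.append_right]
    funext j
    show (lccEncode β x (fun i => p.eval (β (Fin.natAdd ℓ i)))).eval _ = _
    rw [← key]
    exact hp (Sum.inr j)
end

section
/- (Exact coded-distance recovery; universal-performance part of Theorem 1.) Assume n ≥ 2ℓ + 2t − 1. For each data point i ∈ {1,…,m} with segments x_{i,u} ∈ 𝔽_q^r (u ∈ {1,…,ℓ}) and noises z_{i,u} ∈ 𝔽_q^r (u ∈ {1,…,t}), let f_{i,s} (s ∈ {1,…,r}) be the unique polynomial of degree at most ℓ+t−1 with f_{i,s}(β_u) equal to the s-th coordinate of x_{i,u} for u ∈ {1,…,ℓ} and f_{i,s}(β_{ℓ+u}) equal to the s-th coordinate of z_{i,u} for u ∈ {1,…,t}. Fix a subset S ⊆ {1,…,m}, let c ∈ 𝔽_q be the image of the natural number |S| in 𝔽_q, and fix i ∈ {1,…,m}. Then any polynomial ψ over 𝔽_q of degree at most 2ℓ+2t−2 satisfying ψ(α_j)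 = Σ_{s=1}^r ( Σ_{i'∈S} f_{i',s}(α_j) − c·f_{i,s}(α_j) )² for all j ∈ {1,…,n} satisfies Σ_{u=1}^ℓ ψ(β_u) = Σ_{u=1}^ℓ Σ_{s=1}^r ( Σ_{i'∈S} x_{i',u,s} − c·x_{i,u,s} )², where x_{i,u,s} denotes the s-th coordinate of the segment x_{i,u}; that is, the server's decoded value equals the squared distance ‖Σ_{i'∈S} x_{i'} − |S|·x_i‖² of the original (unsegmented) data computed in 𝔽_q, independently of the noise values. -/
open Polynomial

/-- Exact coded-distance recovery (universal-performance part of Theorem 1): with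
`n ≥ 2ℓ+2t-1` clients, any polynomial `ψ` of degree at most `2ℓ+2t-2` agreeing with
the clients' coded distances at all evaluation points `α_j` decodes, via
`Σ_{u≤ℓ} ψ(β_u)`, exactly to the squared distance `‖Σ_{i'∈S} x_{i'} - |S|·x_i‖²` of
the original (unsegmented) data in `𝔽_q`, independently of the noise values. -/
theorem secfc_exact_recovery
    {F : Type*} [Field F] [Fintype F]
    (ℓ t n r m : ℕ) (hℓ : 0 < ℓ) (ht : 0 < t) (hn : 0 < n) (hr : 0 < r) (hm : 0 < m)
    (hcard : 2 * ℓ + 2 * t - 1 ≤ n)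
    (β : Fin (ℓ + t) → F) (hβ : Function.Injective β)
    (α : Fin n → F) (hα : Function.Injective α)
    (hαβ : ∀ j u, α j ≠ β u)
    (x : Fin m → Fin ℓ → Fin r → F) (z : Fin m → Fin t → Fin r → F)
    (S : Finset (Fin m)) (i : Fin m)
    (ψ : F[X]) (hψdeg : ψ.degree ≤ ((2 * ℓ + 2 * t - 2 : ℕ) : WithBot ℕ))
    (hψ : ∀ j : Fin n, ψ.eval (α j) =
      ∑ s : Fin r,
        ((∑ i' ∈ S, (lccEncode β (fun u => x i' u s) (fun u => z i' u s)).eval (α j))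
          - (S.card : F) * (lccEncode β (fun u => x i u s) (fun u => z i u s)).eval (α j)) ^ 2) :
    ∑ u : Fin ℓ, ψ.eval (β (Fin.castAdd t u))
      = ∑ u : Fin ℓ, ∑ s : Fin r,
          ((∑ i' ∈ S, x i' u s) - (S.card : F) * x i u s) ^ 2 := by
  classical
  set enc : Fin m → Fin r → F[X] :=
    fun k s => lccEncode β (fun u => x k u s) (fun u => z k u s) with henc
  have hdeg : ∀ k s, (enc k s).natDegree ≤ ℓ + t - 1 := by
    intro k s
    have h := Lagrange.degree_interpolate_le (s := Finset.univ) (v := β)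
      (Fin.append (fun u => x k u s) (fun u => z k u s)) hβ.injOn
    rw [Finset.card_univ, Fintype.card_fin] at h
    exact Polynomial.natDegree_le_of_degree_le h
  have hev : ∀ k s (u : Fin ℓ), (enc k s).eval (β (Fin.castAdd t u)) = x k u s := by
    intro k s u
    have h := Lagrange.eval_interpolate_at_node (s := Finset.univ) (v := β)
      (Fin.append (fun u => x k u s) (fun u => z k u s)) hβ.injOn
      (Finset.mem_univ (Fin.castAdd t u))
    rw [Fin.append_left] at h
    exact h
  set φ : F[X] := ∑ s : Fin r, ((∑ k ∈ S, enc k s) - C (S.card : F) * enc i s) ^ 2 with hφ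
  have hφdeg : φ.natDegree ≤ 2 * ℓ + 2 * t - 2 := by
    refine Polynomial.natDegree_sum_le_of_forall_le _ _ fun s _ => ?_
    have h1 : ((∑ k ∈ S, enc k s) - C (S.card : F) * enc i s).natDegree ≤ ℓ + t - 1 :=
      (Polynomial.natDegree_sub_le_of_le
        (Polynomial.natDegree_sum_le_of_forall_le _ _ fun k _ => hdeg k s)
        ((Polynomial.natDegree_C_mul_le _ _).trans (hdeg i s))).trans (max_self _).le
    have h2 := Polynomial.natDegree_pow_le_of_le 2 h1
    omega
  have hlt : ∀ p : F[X], p.degree ≤ ((2 * ℓ + 2 * t - 2 : ℕ) : WithBot ℕ) →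
      p.degree < ((Finset.univ : Finset (Fin n)).card : WithBot ℕ) := by
    intro p hp
    refine lt_of_le_of_lt hp ?_
    rw [Finset.card_univ, Fintype.card_fin]
    exact_mod_cast (by omega : 2 * ℓ + 2 * t - 2 < n)
  have hEq : ψ = φ := by
    refine Polynomial.eq_of_degrees_lt_of_eval_index_eq (s := Finset.univ) (v := α)
      hα.injOn (hlt _ hψdeg) (hlt _ (Polynomial.degree_le_of_natDegree_le hφdeg)) ?_
    intro j _
    rw [hψ j, hφ]
    simp [Polynomial.eval_finsetSum, henc]
  rw [hEq]
  refine Finset.sum_congr rfl fun u _ => ?_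
  rw [hφ]
  simp only [Polynomial.eval_finsetSum, Polynomial.eval_pow, Polynomial.eval_sub,
    Polynomial.eval_mul, Polynomial.eval_C, hev]
end
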